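/- Let S ⊂ ℝ^k be a halfspace, A ∈ (APW^k_S)^{p×m}, B ∈ (APW^k_S)^{p×p} with B invertible in (APW^k)^{p×p}, γ > 0, and assume A and B are left coprime over APW^k_S. Let Λ' be any additive subgroup of ℝ^k containing σ(A) ∪ σ(B) (the union of the Bohr-Fourier spectra of all entries). If there exists F ∈ (APW^k_{S∩Λ'})^{m×p} with sup_{t∈ℝ^k} ‖F(t)‖ ≤ γ (operator norm) and A F = B, then the Toeplitz operators satisfy the inequality T(A)_{S,Λ'} (T(A)_{S,Λ'})* ≥ γ^{−2} · T(B)_{S,Λ'} (T(B)_{S,Λ'})* as self-adjoint operators on (B^k_{S∩Λ'})^{p×1}. -/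

import Mathlib

/- Almost periodic functions of `k` real variables, their Bohr-Fourier
coefficients and spectra, the Wiener algebra, and halfspaces. -/

open MeasureTheory Filter BoundedContinuousFunction

noncomputable section

/-- The Banach algebra of bounded continuous functions `ℝ^k → ℂ` (sup norm). -/
abbrev APB (k : ℕ) := BoundedContinuousFunction (Fin k → ℝ) ℂ

/-- The elementary exponential `e_λ(x) = e^{i⟨λ,x⟩}` as a bounded continuous function. -/
def apExp (k : ℕ) (lam : Fin k → ℝ) : APB k :=
  BoundedContinuousFunction.ofNormedAddCommGroup
    (fun x => Complex.exp (Complex.I * ((∑ j, lam j * x j : ℝ) : ℂ)))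
    (by fun_prop) 1
    (fun x => by
      simp [Complex.norm_exp, Complex.mul_re])

/-- `AP^k`: the closed subalgebra of `L^∞`-type bounded continuous functions
generated by all exponentials `e_λ`, `λ ∈ ℝ^k`. -/
def APalg (k : ℕ) : Subalgebra ℂ (APB k) :=
  (Algebra.adjoin ℂ (Set.range (apExp k))).topologicalClosure

/-- The Bohr-Fourier coefficient
`f_λ = lim_{T→∞} (2T)^{-k} ∫_{[-T,T]^k} e^{-i⟨λ,x⟩} f(x) dx`. -/
def bohrCoeff (k : ℕ) (f : (Fin k → ℝ) → ℂ) (lam : Fin k → ℝ) : ℂ :=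
  limUnder atTop (fun T : ℝ =>
    (((2 * T) ^ k : ℝ) : ℂ)⁻¹ *
      ∫ x in Set.Icc (fun _ => -T : Fin k → ℝ) (fun _ => T),
        Complex.exp (-(Complex.I * ((∑ j, lam j * x j : ℝ) : ℂ))) * f x)

/-- The Bohr-Fourier spectrum `σ(f) = {λ : f_λ ≠ 0}`. -/
def bohrSpectrum (k : ℕ) (f : (Fin k → ℝ) → ℂ) : Set (Fin k → ℝ) :=
  {lam | bohrCoeff k f lam ≠ 0}

/-- Membership in `AP^k_Δ = {f ∈ AP^k : σ(f) ⊆ Δ}`. -/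
def APmem (k : ℕ) (Δ : Set (Fin k → ℝ)) (f : APB k) : Prop :=
  f ∈ APalg k ∧ bohrSpectrum k ⇑f ⊆ Δ

/-- Membership in the Wiener algebra `APW^k_Δ`: almost periodic with spectrum
in `Δ` and absolutely convergent Bohr-Fourier series. -/
def APWmem (k : ℕ) (Δ : Set (Fin k → ℝ)) (f : APB k) : Prop :=
  APmem k Δ f ∧ Summable (fun lam => ‖bohrCoeff k (⇑f) lam‖)

/-- The Wiener norm `‖f‖_W = ∑_λ |f_λ|`. -/
def wienerNorm (k : ℕ) (f : (Fin k → ℝ) → ℂ) : ℝ :=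
  ∑' lam, ‖bohrCoeff k f lam‖

/-- A halfspace `S ⊂ ℝ^k`: `ℝ^k = S ∪ (-S)`, `S ∩ (-S) = {0}`, and `S` is
closed under addition and under multiplication by nonnegative reals. -/
structure IsHalfspace (k : ℕ) (S : Set (Fin k → ℝ)) : Prop where
  union : S ∪ -S = Set.univ
  inter : S ∩ -S = {0}
  add_mem : ∀ x ∈ S, ∀ y ∈ S, x + y ∈ S
  smul_mem : ∀ x ∈ S, ∀ a : ℝ, 0 ≤ a → a • x ∈ S

/- The Besicovitch space and Toeplitz operators.  The Besicovitch space `B^k`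
is the Hilbert-space completion of `AP^k` in the inner product `⟨f,g⟩=M{f·ḡ}`;
the exponentials `e_λ` form an orthonormal basis, so `(B^k_Λ)^{n×1}` is
canonically identified (via Bohr-Fourier coefficients) with `ℓ²(Fin n × Λ)`. -/

/-- The column Besicovitch space `(B^k_Λ)^{n×1} ≅ ℓ²(Fin n × Λ)`. -/
abbrev BesCol (k n : ℕ) (Λ : Set (Fin k → ℝ)) : Type :=
  lp (fun _ : Fin n × ↥Λ => ℂ) 2

/-- `T` is the Toeplitz operator
`T(F)_{S,Λ} : (B^k_{S∩Λ})^{n×1} → (B^k_{S∩Λ})^{m×1}`, `φ ↦ Π_{S∩Λ}(Fφ)`,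
characterized by its matrix with respect to the orthonormal basis of
exponentials: `⟪e_ν δ_i , T(e_μ δ_j)⟫ = (F i j)_{ν-μ}` (Bohr-Fourier
coefficient of the `(i,j)` entry at `ν - μ`). -/
def RepresentsToeplitz (k : ℕ) (S Λ : Set (Fin k → ℝ)) (m n : ℕ)
    (F : Matrix (Fin m) (Fin n) (APB k))
    (T : BesCol k n (S ∩ Λ) →L[ℂ] BesCol k m (S ∩ Λ)) : Prop :=
  ∀ (j : Fin n) (μ : ↥(S ∩ Λ)) (i : Fin m) (ν : ↥(S ∩ Λ)),
    (inner ℂ (lp.single 2 (i, ν) (1 : ℂ)) (T (lp.single 2 (j, μ) (1 : ℂ))) : ℂ) =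
      bohrCoeff k (⇑(F i j)) ((ν : Fin k → ℝ) - (μ : Fin k → ℝ))

/-- Invertibility of a continuous linear map. -/
def CLMInvertible {E F : Type*} [NormedAddCommGroup E] [NormedAddCommGroup F]
    [NormedSpace ℂ E] [NormedSpace ℂ F] (T : E →L[ℂ] F) : Prop :=
  ∃ Tinv : F →L[ℂ] E,
    Tinv.comp T = ContinuousLinearMap.id ℂ E ∧ T.comp Tinv = ContinuousLinearMap.id ℂ F

/-- `sup_{t ∈ ℝ^k} ‖F(t)‖ ≤ γ`, where `‖·‖` is the operator norm of a matrix
with respect to Euclidean vector norms. -/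
def MatrixSupOpNormLE (k m n : ℕ) (F : Matrix (Fin m) (Fin n) (APB k))
    (γ : ℝ) : Prop :=
  ∀ (t : Fin k → ℝ) (v : Fin n → ℂ),
    Real.sqrt (∑ i, ‖∑ j, F i j t * v j‖ ^ 2) ≤
      γ * Real.sqrt (∑ j, ‖v j‖ ^ 2)

/-! ### The Bohr mean as a positive functional -/

/-- The average of `f` over the cube `[-T, T]^k`. -/
def boxAvg (k : ℕ) (f : (Fin k → ℝ) → ℂ) (T : ℝ) : ℂ :=
  (((2 * T) ^ k : ℝ) : ℂ)⁻¹ *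
    ∫ x in Set.Icc (fun _ => -T : Fin k → ℝ) (fun _ => T), f x

theorem APB.integrableOn_Icc {k : ℕ} (f : APB k) (a b : Fin k → ℝ) :
    IntegrableOn (fun x => f x) (Set.Icc a b) :=
  f.continuous.continuousOn.integrableOn_compact isCompact_Icc

theorem boxAvg_add {k : ℕ} (f g : APB k) (T : ℝ) :
    boxAvg k ⇑(f + g) T = boxAvg k f T + boxAvg k g T := by
  simp only [boxAvg, BoundedContinuousFunction.coe_add, Pi.add_apply]
  rw [integral_add (f.integrableOn_Icc _ _) (g.integrableOn_Icc _ _), mul_add]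

theorem boxAvg_smul {k : ℕ} (c : ℂ) (f : APB k) (T : ℝ) :
    boxAvg k ⇑(c • f) T = c * boxAvg k f T := by
  simp only [boxAvg, BoundedContinuousFunction.coe_smul, smul_eq_mul]
  rw [integral_const_mul, mul_left_comm]

theorem boxAvg_sub {k : ℕ} (f g : APB k) (T : ℝ) :
    boxAvg k ⇑(f - g) T = boxAvg k f T - boxAvg k g T := by
  simp only [boxAvg, BoundedContinuousFunction.coe_sub, Pi.sub_apply]
  rw [integral_sub (f.integrableOn_Icc _ _) (g.integrableOn_Icc _ _), mul_sub]

theorem norm_boxAvg_le {k : ℕ} (f : APB k) {T : ℝ} (hT : 0 < T) :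
    ‖boxAvg k f T‖ ≤ ‖f‖ := by
  have hvol : volume.real (Set.Icc (fun _ => -T : Fin k → ℝ) (fun _ => T)) = (2 * T) ^ k := by
    rw [measureReal_def, Real.volume_Icc_pi_toReal (fun _ => by linarith)]
    simp [two_mul]
  have h := norm_setIntegral_le_of_norm_le_const (μ := volume) (f := fun x => f x) (C := ‖f‖)
    (s := Set.Icc (fun _ => -T : Fin k → ℝ) (fun _ => T))
    isCompact_Icc.measure_lt_top (fun x _ => f.norm_coe_le_norm x)
  rw [hvol] at h
  have hpos : 0 < (2 * T) ^ k := by positivity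
  rw [boxAvg, norm_mul, norm_inv, Complex.norm_real, Real.norm_of_nonneg hpos.le,
    inv_mul_le_iff₀ hpos, mul_comm]
  exact h

theorem boxAvg_re_nonneg {k : ℕ} (f : APB k) (hf : ∀ x, 0 ≤ (f x).re) {T : ℝ} (hT : 0 < T) :
    0 ≤ (boxAvg k f T).re := by
  rw [boxAvg, ← Complex.ofReal_inv, Complex.re_ofReal_mul]
  refine mul_nonneg (by positivity) ?_
  have h := integral_re (𝕜 := ℂ) (f.integrableOn_Icc (fun _ => -T) (fun _ => T))
  simp only [RCLike.re_to_complex] at h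
  rw [← h]
  exact integral_nonneg fun x => hf x

theorem eventually_of_atTop_pos :
    ∀ᶠ T : ℝ in (Ultrafilter.of (atTop : Filter ℝ) : Filter ℝ), 0 < T :=
  Ultrafilter.of_le _ (eventually_gt_atTop 0)

theorem exists_tendsto_boxAvg {k : ℕ} (f : APB k) :
    ∃ a, Tendsto (boxAvg k f) (Ultrafilter.of (atTop : Filter ℝ)) (nhds a) := by
  have hmem : ∀ᶠ T in (Ultrafilter.of (atTop : Filter ℝ) : Filter ℝ),
      boxAvg k f T ∈ Metric.closedBall (0 : ℂ) ‖f‖ := by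
    filter_upwards [eventually_of_atTop_pos] with T hT
    simpa using norm_boxAvg_le f hT
  obtain ⟨a, -, ha⟩ := (isCompact_closedBall (0 : ℂ) ‖f‖).ultrafilter_le_nhds
    ((Ultrafilter.of (atTop : Filter ℝ)).map (boxAvg k f)) (by
      rw [Ultrafilter.coe_map, le_principal_iff]; exact hmem)
  exact ⟨a, ha⟩

/-- A positive functional extending the Bohr mean to all bounded continuous functions: the limit
of the averages over cubes along an ultrafilter at infinity. -/
def bohrMean (k : ℕ) : APB k →L[ℂ] ℂ :=
  LinearMap.mkContinuous
    { toFun := fun f => (exists_tendsto_boxAvg f).choose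
      map_add' := fun f g => tendsto_nhds_unique (exists_tendsto_boxAvg (f + g)).choose_spec <| by
        simpa only [← boxAvg_add] using
          (exists_tendsto_boxAvg f).choose_spec.add (exists_tendsto_boxAvg g).choose_spec
      map_smul' := fun c f => tendsto_nhds_unique (exists_tendsto_boxAvg (c • f)).choose_spec <| by
        simpa only [← boxAvg_smul, RingHom.id_apply, smul_eq_mul] using
          (exists_tendsto_boxAvg f).choose_spec.const_mul c }
    1 fun f => by
      rw [one_mul]
      refine le_of_tendsto (exists_tendsto_boxAvg f).choose_spec.norm ?_
      filter_upwards [eventually_of_atTop_pos] with T hT using norm_boxAvg_le f hT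

theorem tendsto_boxAvg_bohrMean {k : ℕ} (f : APB k) :
    Tendsto (boxAvg k f) (Ultrafilter.of (atTop : Filter ℝ)) (nhds (bohrMean k f)) :=
  (exists_tendsto_boxAvg f).choose_spec

theorem norm_bohrMean_le {k : ℕ} (f : APB k) : ‖bohrMean k f‖ ≤ ‖f‖ := by
  refine le_of_tendsto (tendsto_boxAvg_bohrMean f).norm ?_
  filter_upwards [eventually_of_atTop_pos] with T hT using norm_boxAvg_le f hT

theorem bohrMean_re_nonneg {k : ℕ} (f : APB k) (hf : ∀ x, 0 ≤ (f x).re) :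
    0 ≤ (bohrMean k f).re := by
  refine ge_of_tendsto ((Complex.continuous_re.tendsto _).comp (tendsto_boxAvg_bohrMean f)) ?_
  filter_upwards [eventually_of_atTop_pos] with T hT using boxAvg_re_nonneg f hf hT

theorem bohrMean_eq_of_tendsto {k : ℕ} {f : APB k} {a : ℂ}
    (h : Tendsto (boxAvg k f) atTop (nhds a)) : bohrMean k f = a :=
  tendsto_nhds_unique (tendsto_boxAvg_bohrMean f) (h.mono_left (Ultrafilter.of_le _))

/-! ### Exponentials -/

theorem apExp_apply {k : ℕ} (lam x : Fin k → ℝ) :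
    apExp k lam x = Complex.exp (Complex.I * ((∑ j, lam j * x j : ℝ) : ℂ)) := rfl

theorem apExp_zero (k : ℕ) : apExp k 0 = 1 := by
  ext x; simp [apExp_apply]

theorem apExp_mul {k : ℕ} (a b : Fin k → ℝ) : apExp k a * apExp k b = apExp k (a + b) := by
  ext x
  simp only [BoundedContinuousFunction.coe_mul, Pi.mul_apply, apExp_apply, ← Complex.exp_add,
    Pi.add_apply, add_mul, Finset.sum_add_distrib, Complex.ofReal_add, mul_add]

theorem star_apExp {k : ℕ} (a : Fin k → ℝ) : star (apExp k a) = apExp k (-a) := by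
  ext x
  rw [BoundedContinuousFunction.star_apply, apExp_apply, apExp_apply, Complex.star_def,
    ← Complex.exp_conj]
  simp

theorem norm_apExp_le {k : ℕ} (a : Fin k → ℝ) : ‖apExp k a‖ ≤ 1 :=
  BoundedContinuousFunction.norm_ofNormedAddCommGroup_le _ zero_le_one _

theorem tendsto_interval_average_exp (c : ℝ) :
    Tendsto (fun T : ℝ => ((2 * T : ℝ) : ℂ)⁻¹ *
      ∫ x in Set.Icc (-T) T, Complex.exp (Complex.I * ((c * x : ℝ) : ℂ))) atTop
      (nhds (if c = 0 then 1 else 0)) := by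
  split_ifs with hc
  · subst hc
    refine tendsto_const_nhds.congr' ?_
    filter_upwards [eventually_gt_atTop 0] with T hT
    have : (T : ℂ) ≠ 0 := by exact_mod_cast hT.ne'
    rw [show (∫ x in Set.Icc (-T) T, Complex.exp (Complex.I * ((0 * x : ℝ) : ℂ))) =
      ((2 * T : ℝ) : ℂ) by simp [Real.volume_real_Icc_of_le (by linarith : -T ≤ T), two_mul]]
    field_simp
  · have hc' : Complex.I * (c : ℂ) ≠ 0 := by simp [hc]
    have hlim : Tendsto (fun T : ℝ => (2 * T)⁻¹ * (2 / |c|)) atTop (nhds 0) := by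
      simpa using (tendsto_inv_atTop_zero.comp
        (tendsto_id.const_mul_atTop (zero_lt_two (α := ℝ)))).mul_const (2 / |c|)
    refine squeeze_zero_norm' ?_ hlim
    filter_upwards [eventually_gt_atTop 0] with T hT
    rw [norm_mul, norm_inv, Complex.norm_real, Real.norm_of_nonneg (by positivity)]
    gcongr
    rw [integral_Icc_eq_integral_Ioc, ← intervalIntegral.integral_of_le (by linarith)]
    simp only [Complex.ofReal_mul, ← mul_assoc]
    rw [integral_exp_mul_complex hc', norm_div]
    have hexp : ∀ y : ℝ, ‖Complex.exp (Complex.I * c * y)‖ = 1 := fun y => by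
      simp [Complex.norm_exp]
    have hden : ‖Complex.I * (c : ℂ)‖ = |c| := by simp
    rw [hden]
    gcongr
    calc _ ≤ _ := norm_sub_le _ _
      _ = 2 := by rw [hexp, hexp]; norm_num

theorem boxAvg_apExp {k : ℕ} (lam : Fin k → ℝ) (T : ℝ) :
    boxAvg k (apExp k lam) T = ∏ j, (((2 * T : ℝ) : ℂ)⁻¹ *
      ∫ x in Set.Icc (-T) T, Complex.exp (Complex.I * ((lam j * x : ℝ) : ℂ))) := by
  have h := integral_fintype_prod_eq_prod (𝕜 := ℂ) (ι := Fin k) (E := fun _ => ℝ)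
    (μ := fun _ => volume.restrict (Set.Icc (-T) T))
    (fun j x => Complex.exp (Complex.I * ((lam j * x : ℝ) : ℂ)))
  rw [← Measure.restrict_pi_pi, ← volume_pi] at h
  rw [Finset.prod_mul_distrib, ← h, boxAvg, ← Set.pi_univ_Icc]
  simp only [apExp_apply, ← Complex.exp_sum, Complex.ofReal_sum, Finset.mul_sum]
  simp [-mul_inv_rev]

theorem tendsto_boxAvg_apExp {k : ℕ} (lam : Fin k → ℝ) :
    Tendsto (boxAvg k (apExp k lam)) atTop (nhds (if lam = 0 then 1 else 0)) := by
  have h := tendsto_finsetProd (Finset.univ : Finset (Fin k))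
    fun j _ => tendsto_interval_average_exp (lam j)
  simp only [← boxAvg_apExp] at h
  convert h using 2
  rw [Finset.prod_ite_zero]
  simp [funext_iff]

theorem bohrMean_apExp {k : ℕ} (lam : Fin k → ℝ) :
    bohrMean k (apExp k lam) = if lam = 0 then 1 else 0 :=
  bohrMean_eq_of_tendsto (tendsto_boxAvg_apExp lam)

/-! ### Almost periodic functions -/

theorem apExp_mem_APalg {k : ℕ} (lam : Fin k → ℝ) : apExp k lam ∈ APalg k :=
  Subalgebra.le_topologicalClosure _ (Algebra.subset_adjoin ⟨lam, rfl⟩)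

/-- A closed subspace containing all exponentials contains all almost periodic functions. -/
theorem APalg_le_of_isClosed {k : ℕ} (V : Submodule ℂ (APB k)) (hV : IsClosed (V : Set (APB k)))
    (hexp : ∀ lam, apExp k lam ∈ V) {f : APB k} (hf : f ∈ APalg k) : f ∈ V := by
  refine closure_minimal (s := (Algebra.adjoin ℂ (Set.range (apExp k)) : Set (APB k))) ?_ hV hf
  have hclosure : (Submonoid.closure (Set.range (apExp k)) : Set (APB k)) ⊆
      Set.range (apExp k) := by
    intro g hg
    induction hg using Submonoid.closure_induction with
    | mem x hx => exact hx
    | one => exact ⟨0, apExp_zero k⟩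
    | mul x y _ _ hx hy =>
      obtain ⟨a, rfl⟩ := hx
      obtain ⟨b, rfl⟩ := hy
      exact ⟨a + b, (apExp_mul a b).symm⟩
  intro g hg
  have hg' : g ∈ Submodule.span ℂ (Submonoid.closure (Set.range (apExp k)) : Set (APB k)) := by
    rw [← Algebra.adjoin_eq_span]; exact hg
  refine Submodule.span_le.2 (fun x hx => ?_) hg'
  obtain ⟨lam, rfl⟩ := hclosure hx
  exact hexp lam

/-- On almost periodic functions the averages over cubes converge. -/
theorem tendsto_boxAvg_of_mem {k : ℕ} {f : APB k} (hf : f ∈ APalg k) :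
    Tendsto (boxAvg k f) atTop (nhds (bohrMean k f)) := by
  let V : Submodule ℂ (APB k) :=
    { carrier := {f | Tendsto (boxAvg k f) atTop (nhds (bohrMean k f))}
      add_mem' := fun {f g} hf hg => by
        have := Tendsto.add hf hg
        simp only [← boxAvg_add, ← map_add] at this
        exact this
      zero_mem' := by
        have : boxAvg k ⇑(0 : APB k) = fun _ => 0 := by ext T; simp [boxAvg]
        simp only [Set.mem_ofPred_eq, this, map_zero]
        exact tendsto_const_nhds
      smul_mem' := fun c f hf => by
        have := Tendsto.const_mul c hf
        simp only [← boxAvg_smul] at this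
        simp only [Set.mem_ofPred_eq, map_smul]
        exact this }
  refine APalg_le_of_isClosed V (isClosed_of_closure_subset fun g hg => ?_) (fun lam => ?_) hf
  · refine Metric.tendsto_nhds.2 fun ε hε => ?_
    obtain ⟨h, hh, hdist⟩ := Metric.mem_closure_iff.1 hg (ε / 3) (by positivity)
    filter_upwards [Metric.tendsto_nhds.1 hh (ε / 3) (by positivity), eventually_gt_atTop 0]
      with T hT hT0
    have h1 := norm_boxAvg_le (g - h) hT0
    have h2 := norm_bohrMean_le (g - h)
    rw [boxAvg_sub, ← dist_eq_norm, ← dist_eq_norm] at h1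
    rw [map_sub, ← dist_eq_norm, ← dist_eq_norm, dist_comm] at h2
    have h3 := dist_triangle4 (boxAvg k g T) (boxAvg k h T) (bohrMean k h) (bohrMean k g)
    linarith
  · change Tendsto _ _ _
    rw [bohrMean_apExp]
    exact tendsto_boxAvg_apExp lam

theorem bohrCoeff_eq_bohrMean {k : ℕ} {f : APB k} (hf : f ∈ APalg k) (lam : Fin k → ℝ) :
    bohrCoeff k f lam = bohrMean k (apExp k (-lam) * f) := by
  have h := tendsto_boxAvg_of_mem ((APalg k).mul_mem (apExp_mem_APalg (-lam)) hf)
  refine Tendsto.limUnder_eq (h.congr fun T => ?_)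
  simp [boxAvg, apExp_apply]

/-- The Bohr-Fourier coefficient of a bounded continuous function, computed with `bohrMean`. -/
def apCoeff (k : ℕ) (f : APB k) (lam : Fin k → ℝ) : ℂ :=
  bohrMean k (apExp k (-lam) * f)

theorem apCoeff_sum {k : ℕ} {ι : Type*} (s : Finset ι) (f : ι → APB k) (lam : Fin k → ℝ) :
    apCoeff k (∑ i ∈ s, f i) lam = ∑ i ∈ s, apCoeff k (f i) lam := by
  simp [apCoeff, Finset.mul_sum]

theorem apCoeff_smul {k : ℕ} (c : ℂ) (f : APB k) (lam : Fin k → ℝ) :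
    apCoeff k (c • f) lam = c * apCoeff k f lam := by
  simp [apCoeff]

theorem apCoeff_mul_apExp {k : ℕ} (f : APB k) (mu lam : Fin k → ℝ) :
    apCoeff k (f * apExp k mu) lam = apCoeff k f (lam - mu) := by
  rw [apCoeff, apCoeff, mul_left_comm, apExp_mul, mul_comm f]
  congr 3
  abel

theorem apCoeff_apExp {k : ℕ} (mu lam : Fin k → ℝ) :
    apCoeff k (apExp k mu) lam = if mu = lam then 1 else 0 := by
  rw [apCoeff, apExp_mul, bohrMean_apExp]
  simp only [neg_add_eq_zero, eq_comm]

/-- Bohr-Fourier coefficients of a product with a function of absolutely convergent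
Bohr-Fourier series. -/
theorem hasSum_apCoeff_mul {k : ℕ} {a f : APB k} (ha : a ∈ APalg k)
    (hf : Summable fun lam => ‖apCoeff k f lam‖) (nu : Fin k → ℝ) :
    HasSum (fun lam => apCoeff k a (nu - lam) * apCoeff k f lam) (apCoeff k (a * f) nu) := by
  have hsum : Summable fun lam => apCoeff k f lam • apExp k lam := by
    refine Summable.of_norm_bounded hf fun lam => ?_
    rw [norm_smul]
    exact mul_le_of_le_one_right (norm_nonneg _) (norm_apExp_le lam)
  obtain ⟨g, hg⟩ := hsum
  have hag : ∀ b : APB k, HasSum (fun lam => apCoeff k b (nu - lam) * apCoeff k f lam)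
      (apCoeff k (b * g) nu) := fun b => by
    have := (bohrMean k).hasSum ((hg.mul_left b).mul_left (apExp k (-nu)))
    refine this.congr_fun fun lam => ?_
    rw [mul_smul_comm, mul_smul_comm, map_smul, smul_eq_mul, mul_comm]
    rw [← apCoeff, apCoeff_mul_apExp]
  let V : Submodule ℂ (APB k) := LinearMap.ker
    ((bohrMean k).comp (ContinuousLinearMap.mul ℂ (APB k) (apExp k (-nu) * (f - g)))).toLinearMap
  have hV : ∀ b, b ∈ V ↔ apCoeff k (b * f) nu = apCoeff k (b * g) nu := fun b => by
    have : b ∈ V ↔ bohrMean k (apExp k (-nu) * (f - g) * b) = 0 := Iff.rfl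
    rw [this, apCoeff, apCoeff, ← sub_eq_zero (a := bohrMean k (_ * (b * f))), ← map_sub]
    ring_nf
  have hmem : a ∈ V := by
    refine APalg_le_of_isClosed V (ContinuousLinearMap.isClosed_ker _) (fun mu => ?_) ha
    rw [hV]
    refine HasSum.unique ?_ (hag _)
    rw [mul_comm, apCoeff_mul_apExp]
    refine (hasSum_ite_eq (nu - mu) (apCoeff k f (nu - mu))).congr_fun fun lam => ?_
    rw [apCoeff_apExp]
    have : mu = nu - lam ↔ lam = nu - mu := by
      constructor <;> (rintro rfl; abel)
    by_cases h : lam = nu - mu <;> simp [this, h]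
  rw [(hV a).1 hmem]
  exact hag a

theorem bohrMean_star_sum_mul {k : ℕ} {ι : Type*} (s : Finset ι) (c : ι → ℂ)
    (l : ι → Fin k → ℝ) (f : APB k) :
    bohrMean k (star (∑ q ∈ s, c q • apExp k (l q)) * f) =
      ∑ q ∈ s, star (c q) * apCoeff k f (l q) := by
  simp only [star_sum, star_smul, star_apExp, Finset.sum_mul, smul_mul_assoc, map_sum, map_smul,
    smul_eq_mul, apCoeff]

/-- Parseval's identity for trigonometric polynomials. -/
theorem bohrMean_star_mul_self_sum {k : ℕ} {ι : Type*} (s : Finset ι) (c : ι → ℂ)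
    (l : ι → Fin k → ℝ) (hl : Set.InjOn l s) :
    bohrMean k (star (∑ q ∈ s, c q • apExp k (l q)) * ∑ q ∈ s, c q • apExp k (l q)) =
      ((∑ q ∈ s, ‖c q‖ ^ 2 : ℝ) : ℂ) := by
  rw [bohrMean_star_sum_mul, Complex.ofReal_sum]
  refine Finset.sum_congr rfl fun q hq => ?_
  rw [apCoeff_sum, Finset.sum_eq_single_of_mem q hq, apCoeff_smul, apCoeff_apExp, if_pos rfl,
    mul_one, Complex.star_def, Complex.conj_mul']
  · norm_cast
  · intro q' hq' hne
    rw [apCoeff_smul, apCoeff_apExp, if_neg fun h => hne (hl hq' hq h), mul_zero]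

/-- Bessel's inequality. -/
theorem sum_norm_apCoeff_sq_le {k : ℕ} {ι : Type*} (s : Finset ι) (l : ι → Fin k → ℝ)
    (hl : Set.InjOn l s) (f : APB k) :
    ∑ q ∈ s, ‖apCoeff k f (l q)‖ ^ 2 ≤ (bohrMean k (star f * f)).re := by
  set P : APB k := ∑ q ∈ s, apCoeff k f (l q) • apExp k (l q) with hP
  have h := bohrMean_re_nonneg (star f * f + star P * P - (2 : ℂ) • (star P * f)) fun x => by
    have : ((star f * f + star P * P - (2 : ℂ) • (star P * f)) x).re =
        Complex.normSq (f x - P x) := by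
      simp [Complex.normSq_apply]
      ring
    rw [this]
    exact Complex.normSq_nonneg _
  have h1 : bohrMean k (star P * P) = ((∑ q ∈ s, ‖apCoeff k f (l q)‖ ^ 2 : ℝ) : ℂ) :=
    bohrMean_star_mul_self_sum s _ l hl
  have h2 : bohrMean k (star P * f) = ((∑ q ∈ s, ‖apCoeff k f (l q)‖ ^ 2 : ℝ) : ℂ) := by
    rw [hP, bohrMean_star_sum_mul, Complex.ofReal_sum]
    refine Finset.sum_congr rfl fun q _ => ?_
    rw [Complex.star_def, Complex.conj_mul']
    norm_cast
  rw [map_sub, map_add, map_smul, h1, h2, smul_eq_mul, Complex.sub_re, Complex.add_re,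
    Complex.re_mul_ofReal, Complex.ofReal_re] at h
  norm_num at h
  linarith

/-! ### Multiplication of finitely supported columns -/

/-- The column of trigonometric polynomials with coefficients `c` at the indices in `s`. -/
def trigCol {k p : ℕ} {L : Set (Fin k → ℝ)} (s : Finset (Fin p × ↥L)) (c : Fin p × ↥L → ℂ)
    (j : Fin p) : APB k :=
  ∑ q ∈ s with q.1 = j, c q • apExp k q.2

theorem injOn_snd_filter {k p : ℕ} {L : Set (Fin k → ℝ)} (s : Finset (Fin p × ↥L)) (j : Fin p) :
    Set.InjOn (fun q : Fin p × ↥L => (q.2 : Fin k → ℝ)) (s.filter (fun q => q.1 = j)) := by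
  intro a ha b hb hab
  simp only [Finset.coe_filter, Set.mem_ofPred_eq] at ha hb
  exact Prod.ext (ha.2.trans hb.2.symm) (Subtype.ext hab)

theorem apCoeff_mul_trigCol {k p : ℕ} {L : Set (Fin k → ℝ)} (s : Finset (Fin p × ↥L))
    (c : Fin p × ↥L → ℂ) (G : Fin p → APB k) (nu : Fin k → ℝ) :
    apCoeff k (∑ j, G j * trigCol s c j) nu = ∑ q ∈ s, c q * apCoeff k (G q.1) (nu - q.2) := by
  rw [apCoeff_sum, ← Finset.sum_fiberwise s Prod.fst]
  refine Finset.sum_congr rfl fun j _ => ?_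
  rw [trigCol, Finset.mul_sum, apCoeff_sum]
  refine Finset.sum_congr rfl fun q hq => ?_
  rw [mul_smul_comm, apCoeff_smul, apCoeff_mul_apExp, (Finset.mem_filter.1 hq).2]

/-- Multiplication by a matrix function with norm at most `γ` is bounded by `γ` on finitely
supported columns, in the Besicovitch norm. -/
theorem exists_mulCol {k m p : ℕ} {L : Set (Fin k → ℝ)} {F : Matrix (Fin m) (Fin p) (APB k)}
    {γ : ℝ} (hγ : 0 ≤ γ) (hF : MatrixSupOpNormLE k m p F γ) (s : Finset (Fin p × ↥L))
    (c : Fin p × ↥L → ℂ) :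
    ∃ z : BesCol k m L, (∀ q, z q = apCoeff k (∑ j, F q.1 j * trigCol s c j) q.2) ∧
      ‖z‖ ≤ γ * √(∑ q ∈ s, ‖c q‖ ^ 2) := by
  set y := trigCol s c
  set f : Fin m → APB k := fun l => ∑ j, F l j * y j with hf
  have hy : ∑ j, (bohrMean k (star (y j) * y j)).re = ∑ q ∈ s, ‖c q‖ ^ 2 := by
    rw [← Finset.sum_fiberwise s Prod.fst]
    refine Finset.sum_congr rfl fun j _ => ?_
    have := bohrMean_star_mul_self_sum _ c _ (injOn_snd_filter s j)
    exact (congrArg Complex.re this).trans (Complex.ofReal_re _)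
  have hfy : ∑ l, (bohrMean k (star (f l) * f l)).re ≤
      γ ^ 2 * ∑ j, (bohrMean k (star (y j) * y j)).re := by
    have h := bohrMean_re_nonneg
      (((γ ^ 2 : ℝ) : ℂ) • (∑ j, star (y j) * y j) - ∑ l, star (f l) * f l) fun t => by
        have h1 := hF t fun j => y j t
        rw [← sq_le_sq₀ (Real.sqrt_nonneg _) (mul_nonneg hγ (Real.sqrt_nonneg _)), mul_pow,
          Real.sq_sqrt (by positivity), Real.sq_sqrt (by positivity)] at h1
        have h2 : ∀ g : APB k, (star (g t) * g t).re = ‖g t‖ ^ 2 := fun g => by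
          rw [Complex.star_def, Complex.conj_mul']
          norm_cast
        simp only [BoundedContinuousFunction.coe_sub, BoundedContinuousFunction.coe_smul,
          BoundedContinuousFunction.coe_sum, Pi.sub_apply, Finset.sum_apply,
          BoundedContinuousFunction.coe_mul, Pi.mul_apply, BoundedContinuousFunction.star_apply,
          Complex.sub_re, smul_eq_mul, Complex.re_ofReal_mul, Complex.re_sum, h2]
        have h3 : ∀ l, f l t = ∑ j, F l j t * y j t := fun l => by
          simp [hf, BoundedContinuousFunction.coe_sum]
        simp only [h3]
        linarith
    rw [map_sub, map_smul, map_sum, map_sum, Complex.sub_re, smul_eq_mul, Complex.re_ofReal_mul,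
      Complex.re_sum, Complex.re_sum] at h
    linarith
  have hbound : ∀ t : Finset (Fin m × ↥L),
      ∑ q ∈ t, ‖apCoeff k (f q.1) q.2‖ ^ 2 ≤ (γ * √(∑ q ∈ s, ‖c q‖ ^ 2)) ^ 2 := fun t => by
    rw [mul_pow, Real.sq_sqrt (by positivity), ← hy]
    refine le_trans ?_ hfy
    rw [← Finset.sum_fiberwise t Prod.fst]
    refine Finset.sum_le_sum fun l _ => ?_
    refine le_trans (le_of_eq (Finset.sum_congr rfl fun q hq => ?_))
      (sum_norm_apCoeff_sq_le _ _ (injOn_snd_filter t l) (f l))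
    rw [(Finset.mem_filter.1 hq).2]
  have hmem : Memℓp (E := fun _ : Fin m × ↥L => ℂ) (fun q => apCoeff k (f q.1) q.2) 2 :=
    memℓp_gen' (C := (γ * √(∑ q ∈ s, ‖c q‖ ^ 2)) ^ 2) fun t => by simpa using hbound t
  refine ⟨⟨_, hmem⟩, fun q => rfl, ?_⟩
  exact lp.norm_le_of_forall_sum_le (by norm_num) (by positivity) fun t => by
    simpa using hbound t

/-- A Toeplitz operator maps the coefficients of a column to the coefficients of the product. -/
theorem RepresentsToeplitz.apply_eq {k m p : ℕ} {S Λ : Set (Fin k → ℝ)}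
    {A : Matrix (Fin p) (Fin m) (APB k)} (hA : ∀ i j, A i j ∈ APalg k)
    {T : BesCol k m (S ∩ Λ) →L[ℂ] BesCol k p (S ∩ Λ)}
    (hT : RepresentsToeplitz k S Λ p m A T) {f : Fin m → APB k}
    (hf : ∀ l, Summable fun lam => ‖apCoeff k (f l) lam‖)
    (hsupp : ∀ l lam, lam ∉ S ∩ Λ → apCoeff k (f l) lam = 0)
    {z : BesCol k m (S ∩ Λ)} (hz : ∀ q, z q = apCoeff k (f q.1) q.2)
    (q : Fin p × ↥(S ∩ Λ)) :
    T z q = apCoeff k (∑ l, A q.1 l * f l) q.2 := by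
  obtain ⟨i, nu⟩ := q
  have hcoord : T z (i, nu) = inner ℂ (lp.single 2 (i, nu) (1 : ℂ)) (T z) := by
    rw [lp.inner_single_left]; simp
  rw [hcoord, ← ContinuousLinearMap.adjoint_inner_left]
  refine (lp.hasSum_inner _ z).unique ?_
  have hterm : ∀ q : Fin m × ↥(S ∩ Λ),
      inner ℂ ((ContinuousLinearMap.adjoint T) (lp.single 2 (i, nu) (1 : ℂ)) q) (z q) =
        apCoeff k (A i q.1) (nu - q.2) * apCoeff k (f q.1) q.2 := fun q => by
    have h := hT q.1 q.2 i nu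
    rw [← ContinuousLinearMap.adjoint_inner_left, lp.inner_single_right,
      bohrCoeff_eq_bohrMean (hA _ _)] at h
    rw [← apCoeff] at h
    rw [hz, ← h]
    simp [mul_comm]
  simp only [hterm]
  rw [apCoeff_sum]
  have hcol : ∀ l, HasSum (fun lam : ↥(S ∩ Λ) =>
      apCoeff k (A i l) (nu - lam) * apCoeff k (f l) lam) (apCoeff k (A i l * f l) nu) := fun l => by
    have := hasSum_apCoeff_mul (hA i l) (hf l) nu
    exact (hasSum_subtype_iff_of_support_subset (f := fun lam =>
      apCoeff k (A i l) (nu - lam) * apCoeff k (f l) lam) fun lam hlam => by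
        by_contra h
        exact hlam (by simp [hsupp l lam h])).2 this
  have hsummable : Summable fun q : Fin m × ↥(S ∩ Λ) =>
      apCoeff k (A i q.1) (nu - q.2) * apCoeff k (f q.1) q.2 := by
    exact (lp.summable_inner ((ContinuousLinearMap.adjoint T) (lp.single 2 (i, nu) (1 : ℂ)))
      z).congr hterm
  have := hsummable.hasSum.prod_fiberwise hcol
  rw [← this.unique (hasSum_fintype _)]
  exact hsummable.hasSum

/-- If `A F = B`, then `T(B)` agrees on a finitely supported column with `T(A)` applied to the
product of `F` with this column. -/
theorem exists_toeplitz_factor {k m p : ℕ} {S : Set (Fin k → ℝ)} (hS : IsHalfspace k S)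
    {Lam : AddSubgroup (Fin k → ℝ)}
    {A : Matrix (Fin p) (Fin m) (APB k)} (hA : ∀ i j, A i j ∈ APalg k)
    {B : Matrix (Fin p) (Fin p) (APB k)} (hB : ∀ i j, B i j ∈ APalg k)
    {F : Matrix (Fin m) (Fin p) (APB k)} (hFW : ∀ i j, APWmem k (S ∩ ↑Lam) (F i j))
    {γ : ℝ} (hγ : 0 ≤ γ) (hF : MatrixSupOpNormLE k m p F γ) (hAF : A * F = B)
    {TA : BesCol k m (S ∩ ↑Lam) →L[ℂ] BesCol k p (S ∩ ↑Lam)}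
    {TB : BesCol k p (S ∩ ↑Lam) →L[ℂ] BesCol k p (S ∩ ↑Lam)}
    (hTA : RepresentsToeplitz k S (↑Lam) p m A TA)
    (hTB : RepresentsToeplitz k S (↑Lam) p p B TB)
    (s : Finset (Fin p × ↥(S ∩ (Lam : Set (Fin k → ℝ)))))
    (c : Fin p × ↥(S ∩ (Lam : Set (Fin k → ℝ))) → ℂ) :
    ∃ z, TA z = TB (∑ q ∈ s, lp.single 2 q (c q)) ∧ ‖z‖ ≤ γ * √(∑ q ∈ s, ‖c q‖ ^ 2) := by
  obtain ⟨z, hz, hnorm⟩ := exists_mulCol hγ hF s c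
  refine ⟨z, ?_, hnorm⟩
  have hFcoeff : ∀ i j lam, apCoeff k (F i j) lam = bohrCoeff k (F i j) lam := fun i j lam =>
    (bohrCoeff_eq_bohrMean (hFW i j).1.1 lam).symm
  ext q
  rw [hTA.apply_eq hA (f := fun l => ∑ j, F l j * trigCol s c j) ?_ ?_ hz]
  · have hmul : ∑ l, A q.1 l * ∑ j, F l j * trigCol s c j = ∑ j, B q.1 j * trigCol s c j := by
      simp only [← hAF, Matrix.mul_apply, Finset.mul_sum, Finset.sum_mul, mul_assoc]
      exact Finset.sum_comm
    rw [hmul, apCoeff_mul_trigCol, map_sum, lp.coeFn_sum, Finset.sum_apply]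
    refine Finset.sum_congr rfl fun r _ => ?_
    have h := hTB r.1 r.2 q.1 q.2
    rw [lp.inner_single_left, bohrCoeff_eq_bohrMean (hB _ _)] at h
    rw [apCoeff, ← h, show lp.single 2 r (c r) =
      c r • (lp.single 2 r (1 : ℂ) : BesCol k p (S ∩ ↑Lam)) by
        rw [← lp.single_smul, smul_eq_mul, mul_one]]
    simp
  · intro l
    simp only [apCoeff_mul_trigCol]
    refine Summable.of_norm_bounded (g := fun lam => ∑ q ∈ s,
      ‖c q‖ * ‖apCoeff k (F l q.1) (lam - q.2)‖) (summable_sum fun q _ => ?_) fun lam => ?_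
    · simp only [hFcoeff]
      exact ((hFW l q.1).2.comp_injective (sub_left_injective (b := (q.2 : Fin k → ℝ)))).mul_left _
    · rw [norm_norm]
      exact (norm_sum_le _ _).trans_eq (by simp only [norm_mul])
  · intro l lam hlam
    rw [apCoeff_mul_trigCol]
    refine Finset.sum_eq_zero fun q _ => ?_
    rw [hFcoeff, mul_eq_zero]
    right
    by_contra hne
    have hmem := (hFW l q.1).1.2 hne
    refine hlam ?_
    rw [← sub_add_cancel lam (q.2 : Fin k → ℝ)]
    exact ⟨hS.add_mem _ hmem.1 _ q.2.2.1, Lam.add_mem hmem.2 q.2.2.2⟩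

/-- **Theorem 5.1, necessity part.**  Let `S ⊂ ℝ^k` be a halfspace,
`A ∈ (APW^k_S)^{p×m}`, `B ∈ (APW^k_S)^{p×p}` invertible in `(APW^k)^{p×p}`,
`γ > 0`, `A` and `B` left coprime over `APW^k_S`, and `Λ'` an additive
subgroup of `ℝ^k` containing `σ(A) ∪ σ(B)`.  If there is an
`F ∈ (APW^k_{S∩Λ'})^{m×p}` with `sup_t ‖F(t)‖ ≤ γ` and `A F = B`, then
`T(A) T(A)* ≥ γ⁻² T(B) T(B)*`. -/
theorem toeplitz_corona_necessity (k p m : ℕ)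
    (S : Set (Fin k → ℝ)) (hS : IsHalfspace k S)
    (A : Matrix (Fin p) (Fin m) (APB k)) (hA : ∀ i j, APWmem k S (A i j))
    (B : Matrix (Fin p) (Fin p) (APB k)) (hB : ∀ i j, APWmem k S (B i j))
    (hBinv : ∃ Binv : Matrix (Fin p) (Fin p) (APB k),
      (∀ i j, APWmem k Set.univ (Binv i j)) ∧ B * Binv = 1 ∧ Binv * B = 1)
    (γ : ℝ) (hγ : 0 < γ)
    (hcoprime : ∃ (Y₁ : Matrix (Fin m) (Fin p) (APB k))
        (Y₂ : Matrix (Fin p) (Fin p) (APB k)),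
      (∀ i j, APWmem k S (Y₁ i j)) ∧ (∀ i j, APWmem k S (Y₂ i j)) ∧
      A * Y₁ + B * Y₂ = 1)
    (Lam : AddSubgroup (Fin k → ℝ))
    (hLamA : ∀ i j, bohrSpectrum k (⇑(A i j)) ⊆ ↑Lam)
    (hLamB : ∀ i j, bohrSpectrum k (⇑(B i j)) ⊆ ↑Lam)
    (hF : ∃ F : Matrix (Fin m) (Fin p) (APB k),
      (∀ i j, APWmem k (S ∩ ↑Lam) (F i j)) ∧
      MatrixSupOpNormLE k m p F γ ∧ A * F = B) :
    ∀ (TA : BesCol k m (S ∩ ↑Lam) →L[ℂ] BesCol k p (S ∩ ↑Lam))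
      (TB : BesCol k p (S ∩ ↑Lam) →L[ℂ] BesCol k p (S ∩ ↑Lam)),
      RepresentsToeplitz k S (↑Lam) p m A TA →
      RepresentsToeplitz k S (↑Lam) p p B TB →
      (TA.comp (ContinuousLinearMap.adjoint TA) -
        ((γ : ℂ) ^ 2)⁻¹ • TB.comp (ContinuousLinearMap.adjoint TB)).IsPositive := by
  obtain ⟨F, hFW, hFγ, hAF⟩ := hF
  intro TA TB hTA hTB
  have hkey : ∀ x, ‖ContinuousLinearMap.adjoint TB x‖ ≤
      γ * ‖ContinuousLinearMap.adjoint TA x‖ := by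
    intro x
    set w := ContinuousLinearMap.adjoint TB x with hw
    have hfin : ∀ s : Finset (Fin p × ↥(S ∩ (Lam : Set (Fin k → ℝ)))),
        ‖inner ℂ w (∑ q ∈ s, lp.single 2 q (w q))‖ ≤
          ‖ContinuousLinearMap.adjoint TA x‖ * (γ * ‖w‖) := fun s => by
      obtain ⟨z, hz, hnorm⟩ := exists_toeplitz_factor hS (fun i j => (hA i j).1.1)
        (fun i j => (hB i j).1.1) hFW hγ.le hFγ hAF hTA hTB s w
      rw [hw, ContinuousLinearMap.adjoint_inner_left, ← hw, ← hz,
        ← ContinuousLinearMap.adjoint_inner_left]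
      refine (norm_inner_le_norm _ _).trans ?_
      gcongr
      refine hnorm.trans ?_
      gcongr
      refine Real.sqrt_le_iff.2 ⟨norm_nonneg _, ?_⟩
      simpa using lp.sum_rpow_le_norm_rpow (p := 2) (by norm_num) w s
    have hlim : Tendsto (fun s => ‖inner ℂ w (∑ q ∈ s, lp.single 2 q (w q))‖) atTop
        (nhds ‖(inner ℂ w w : ℂ)‖) :=
      (Tendsto.inner tendsto_const_nhds (lp.hasSum_single ENNReal.ofNat_ne_top w)).norm
    have hle := le_of_tendsto' hlim hfin
    rw [inner_self_eq_norm_sq_to_K, norm_pow, RCLike.norm_ofReal, abs_norm] at hle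
    rcases (norm_nonneg w).eq_or_lt with h0 | h0
    · rw [← h0]; positivity
    · nlinarith
  refine ContinuousLinearMap.isPositive_def'.2 ⟨?_, fun x => ?_⟩
  · refine (TA.isPositive_self_comp_adjoint.isSelfAdjoint).sub
      (IsSelfAdjoint.smul ?_ TB.isPositive_self_comp_adjoint.isSelfAdjoint)
    rw [← Complex.ofReal_pow, ← Complex.ofReal_inv]
    exact Complex.conj_ofReal _
  · have hsq : ∀ {n : ℕ} (T : BesCol k n (S ∩ ↑Lam) →L[ℂ] BesCol k p (S ∩ ↑Lam)),
        inner ℂ (T (ContinuousLinearMap.adjoint T x)) x =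
          ((‖ContinuousLinearMap.adjoint T x‖ ^ 2 : ℝ) : ℂ) := fun T => by
      rw [← ContinuousLinearMap.adjoint_inner_right, inner_self_eq_norm_sq_to_K]
      norm_cast
    rw [ContinuousLinearMap.reApplyInnerSelf, _root_.sub_apply,
      _root_.smul_apply, ContinuousLinearMap.comp_apply,
      ContinuousLinearMap.comp_apply, inner_sub_left, inner_smul_left, hsq, hsq,
      ← Complex.ofReal_pow, ← Complex.ofReal_inv, Complex.conj_ofReal, ← Complex.ofReal_mul,
      ← Complex.ofReal_sub, RCLike.re_to_complex, Complex.ofReal_re, sub_nonneg,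
      inv_mul_le_iff₀ (by positivity), ← mul_pow]
    exact pow_le_pow_left₀ (norm_nonneg _) (hkey x) 2
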